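/- arXiv:1112.5157 — 2 statements merged into one kernel-verified Lean document; each statement's English description precedes it below -/
import Mathlib

section
/- Let d > 6, let G be a connected d-regular graph such that G² is not complete, let R be a C region of G, let v ∈ R satisfy deg₂(v) = 2 and N₂'(v) = {u}, and let G_v be the vertex set of the connected component of G − u containing v. Then R = G_v; in particular, u ∉ R. -/
open SimpleGraph

variable {V : Type*}

/-- The set of vertices at distance exactly `i` from `v`. -/
def distSet (G : SimpleGraph V) (v : V) (i : ℕ) : Set V := {u | G.dist v u = i}

/-- `deg₂ v` : the number of vertices at distance exactly 2 from `v`. -/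
noncomputable def deg2 (G : SimpleGraph V) (v : V) : ℕ := (distSet G v 2).ncard

/-- `N₂'(v)` : vertices at distance 2 from `v` that are adjacent to a vertex at
distance 3 from `v`. -/
def N2' (G : SimpleGraph V) (v : V) : Set V :=
  {u | G.dist v u = 2 ∧ ∃ w, G.dist v w = 3 ∧ G.Adj u w}

/-- The square of `G` : an edge between `u` and `v` whenever `1 ≤ d(u,v) ≤ 2`. -/
def graphSquare (G : SimpleGraph V) : SimpleGraph V where
  Adj u v := 1 ≤ G.dist u v ∧ G.dist u v ≤ 2
  symm := by
    constructor
    intro u v h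
    rwa [SimpleGraph.dist_comm]
  loopless := by
    constructor
    intro v h
    simp [SimpleGraph.dist_self] at h

/-- `G` is `d`-regular : every vertex has exactly `d` neighbors. -/
def IsRegularGraph (G : SimpleGraph V) (d : ℕ) : Prop :=
  ∀ v, (G.neighborSet v).ncard = d

/-- The vertex set of the connected component of `G - u` containing `v` :
all vertices reachable from `v` by a walk avoiding `u`. -/
def compDel (G : SimpleGraph V) (u v : V) : Set V :=
  {w | ∃ p : G.Walk v w, u ∉ p.support}

/-- One step of the equivalence relation generating regions : both vertices are low degree
(`deg₂ ≤ 3`) and they are within distance 2 of each other. -/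
def regStep (G : SimpleGraph V) (a b : V) : Prop :=
  deg2 G a ≤ 3 ∧ deg2 G b ≤ 3 ∧ G.Reachable a b ∧ G.dist a b ≤ 2

/-- A region : an equivalence class of low-degree vertices under chains of `regStep`,
together with all neighbors of vertices of the class. -/
def IsRegion (G : SimpleGraph V) (R : Set V) : Prop :=
  ∃ x₀, deg2 G x₀ ≤ 3 ∧
    R = {y | Relation.ReflTransGen (regStep G) x₀ y} ∪
        {y | ∃ x, Relation.ReflTransGen (regStep G) x₀ x ∧ G.Adj x y}

/-!
Put `A = G_v`. Since `u` is the only vertex of `N₂(v)` with a neighbor at distance 3, `A` consists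
of `v`, its `d` neighbors and the vertex of `N₂(v)` other than `u`; so `|A| = d + 2`, and all edges
leaving `A` end in `u`. Hence a vertex of `A` has exactly one non-neighbor in `A` if it is not
adjacent to `u` (call it interior), and exactly two if it is. By handshaking in the complement of
`G[A]` the number of interior vertices is even. It exceeds by 2 the number of neighbors of `u`
outside `A`, which is positive; so there are at least 4 interior vertices and at least 2 such
neighbors. It follows that interior vertices have `deg₂ ≤ 2`, whereas `u` and the vertices of `A`
adjacent to `u` have `deg₂ ≥ 4`. So the class of `v` is the set of interior vertices, and the
neighbors of these fill up `A`.
-/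

section

open Finset

section Distance

variable {G : SimpleGraph V} {x y : V}

theorem mem_distSet_two :
    y ∈ distSet G x 2 ↔ x ≠ y ∧ ¬G.Adj x y ∧ ∃ m, G.Adj x m ∧ G.Adj m y := by
  have dist_iff_edist : G.dist x y = 2 ↔ G.edist x y = 2 := ENat.toNat_eq_iff two_ne_zero
  rw [distSet, Set.mem_ofPred_eq, dist_iff_edist, edist_eq_two_iff]
  simp only [Set.Nonempty, mem_commonNeighbors, G.adj_comm y]

theorem reachable_and_dist_le_two_iff :
    G.Reachable x y ∧ G.dist x y ≤ 2 ↔ x = y ∨ G.Adj x y ∨ y ∈ distSet G x 2 := by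
  constructor
  · rintro ⟨hxy, hle⟩
    rw [← hxy.dist_eq_zero_iff, ← dist_eq_one_iff_adj, distSet, Set.mem_ofPred_eq]
    omega
  · rintro (rfl | h | h)
    · simp
    · exact ⟨h.reachable, by simp [dist_eq_one_iff_adj.2 h]⟩
    · exact ⟨.of_dist_ne_zero (h.trans_ne two_ne_zero), h.le⟩

theorem finite_distSet_two [G.LocallyFinite] : (distSet G x 2).Finite := by
  refine ((G.neighborSet x).toFinite.biUnion fun m _ => (G.neighborSet m).toFinite).subset ?_
  intro y hy
  obtain ⟨-, -, m, hxm, hmy⟩ := mem_distSet_two.1 hy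
  exact Set.mem_biUnion hxm hmy

theorem card_le_deg2 [G.LocallyFinite] {S : Finset V} (hS : ↑S ⊆ distSet G x 2) :
    #S ≤ deg2 G x :=
  (Set.ncard_coe_finset S).ge.trans (Set.ncard_le_ncard hS finite_distSet_two)

theorem deg2_le_card {S : Finset V} (hS : distSet G x 2 ⊆ S) : deg2 G x ≤ #S :=
  (Set.ncard_le_ncard hS S.finite_toSet).trans_eq (Set.ncard_coe_finset S)

end Distance

section Region

variable {G : SimpleGraph V} {R : Set V} {x y v : V}

theorem regStep.symm (h : regStep G x y) : regStep G y x :=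
  ⟨h.2.1, h.1, h.2.2.1.symm, dist_comm.trans_le h.2.2.2⟩

theorem deg2_le_three_of_reflTransGen (hx : deg2 G x ≤ 3)
    (h : Relation.ReflTransGen (regStep G) x y) : deg2 G y ≤ 3 := by
  rcases h.cases_tail with rfl | ⟨_, -, hy⟩
  · exact hx
  · exact hy.2.1

theorem IsRegion.eq_of_mem (hR : IsRegion G R) (hvR : v ∈ R) (hv : deg2 G v ≤ 3) :
    R = {y | Relation.ReflTransGen (regStep G) v y} ∪
        {y | ∃ x, Relation.ReflTransGen (regStep G) v x ∧ G.Adj x y} := by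
  obtain ⟨x₀, hx₀, rfl⟩ := hR
  have hx₀v : Relation.ReflTransGen (regStep G) x₀ v := by
    rcases hvR with h | ⟨x, h, hxv⟩
    · exact h
    · exact h.tail ⟨deg2_le_three_of_reflTransGen hx₀ h, hv,
        reachable_and_dist_le_two_iff.2 (.inr (.inl hxv))⟩
  have hvx₀ : Relation.ReflTransGen (regStep G) v x₀ :=
    by
    have : Std.Symm (regStep G) := ⟨fun _ _ => regStep.symm⟩
    exact symm hx₀v
  have class_eq (y : V) : Relation.ReflTransGen (regStep G) x₀ y ↔
      Relation.ReflTransGen (regStep G) v y := ⟨hvx₀.trans, hx₀v.trans⟩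
  simp only [class_eq]

end Region

section Counting

variable (G : SimpleGraph V) (A : Finset V) [DecidableRel G.Adj]

theorem even_card_filter_odd_card_filter_adj :
    Even #{x ∈ A | Odd #{y ∈ A | G.Adj x y}} := by
  have degree_induce (x : A) : (G.induce A).degree x = #{y ∈ A | G.Adj x y} := by
    rw [← card_neighborFinset_eq_degree, ← card_map (.subtype _)]
    congr 1
    ext y
    simp [and_comm]
  have handshake := (G.induce A).even_card_odd_degree_vertices
  simp only [degree_induce] at handshake
  convert handshake using 1
  rw [← card_map (.subtype _)]
  congr 1
  ext x
  simp [and_comm]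

variable {A} in
theorem card_filter_adj_add_card_filter_compl_adj [DecidableEq V] {x : V} (hx : x ∈ A) :
    #{y ∈ A | G.Adj x y} + #{y ∈ A | Gᶜ.Adj x y} + 1 = #A := by
  have compl_eq : {y ∈ A | Gᶜ.Adj x y} = {y ∈ A | ¬G.Adj x y}.erase x := by
    ext y
    simp only [mem_filter, mem_erase, compl_adj]
    tauto
  have hx' : x ∈ {y ∈ A | ¬G.Adj x y} := by simp [hx]
  rw [compl_eq, add_assoc, card_erase_add_one hx', card_filter_add_card_filter_not]

end Counting

/-- `A` is a pendant set at `u`: all edges leaving `A` end in the vertex `u ∉ A`, which has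
neighbors both inside and outside `A`. The size `d + 2` is the one for which, in a `d`-regular
graph, a vertex of `A` has one or two non-neighbors in `A`; the set `G_v` is of this kind. The
vertices of `A` not adjacent to `u` are referred to as interior. -/
structure IsPendant (G : SimpleGraph V) (d : ℕ) (u : V) (A : Finset V) : Prop where
  card_eq : #A = d + 2
  notMem : u ∉ A
  mem_of_adj : ∀ ⦃x y⦄, x ∈ A → G.Adj x y → y ≠ u → y ∈ A
  exists_adj_mem : ∃ a ∈ A, G.Adj u a
  exists_adj_notMem : ∃ z ∉ A, G.Adj u z

namespace IsPendant

variable {G : SimpleGraph V} {d : ℕ} {u : V} {A : Finset V} {a b x y : V}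

theorem mem_or_eq_of_adj (h : IsPendant G d u A) (hx : x ∈ A) (hxy : G.Adj x y) :
    y ∈ A ∨ y = u :=
  or_iff_not_imp_right.2 (h.mem_of_adj hx hxy)

theorem mem_of_adj_interior (h : IsPendant G d u A) (hb : b ∈ A) (hub : ¬G.Adj u b)
    (hby : G.Adj b y) : y ∈ A :=
  h.mem_of_adj hb hby (by rintro rfl; exact hub hby.symm)

theorem mem_or_eq_of_mem_distSet_two (h : IsPendant G d u A) (hb : b ∈ A) (hub : ¬G.Adj u b)
    (hy : y ∈ distSet G b 2) : y ∈ A ∨ y = u := by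
  obtain ⟨-, -, m, hbm, hmy⟩ := mem_distSet_two.1 hy
  exact h.mem_or_eq_of_adj (h.mem_of_adj_interior hb hub hbm) hmy

theorem interior_mem_distSet_two (h : IsPendant G d u A) (hb : b ∈ A) (hub : ¬G.Adj u b)
    (hua : G.Adj u a) (hab : G.Adj a b) : b ∈ distSet G u 2 :=
  mem_distSet_two.2 ⟨(ne_of_mem_of_not_mem hb h.notMem).symm, hub, a, hua, hab⟩

theorem card_adj_add_card_interior (h : IsPendant G d u A) [DecidableRel G.Adj] :
    #{x ∈ A | G.Adj u x} + #{x ∈ A | ¬G.Adj u x} = d + 2 := by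
  rw [card_filter_add_card_filter_not, h.card_eq]

variable [G.LocallyFinite]

theorem filter_adj_eq_erase [DecidableEq V] [DecidableRel G.Adj] (h : IsPendant G d u A)
    (hx : x ∈ A) : {y ∈ A | G.Adj x y} = (G.neighborFinset x).erase u := by
  ext y
  simp only [mem_filter, mem_erase, mem_neighborFinset]
  exact ⟨fun hy => ⟨ne_of_mem_of_not_mem hy.1 h.notMem, hy.2⟩,
    fun hy => ⟨h.mem_of_adj hx hy.2 hy.1, hy.2⟩⟩

theorem card_filter_compl_adj [DecidableEq V] [DecidableRel G.Adj] (h : IsPendant G d u A)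
    (hreg : G.IsRegularOfDegree d) (hx : x ∈ A) :
    #{y ∈ A | Gᶜ.Adj x y} = if G.Adj u x then 2 else 1 := by
  have hcount := card_filter_adj_add_card_filter_compl_adj G hx
  rw [h.filter_adj_eq_erase hx, card_erase_eq_ite, card_neighborFinset_eq_degree, hreg x,
    h.card_eq] at hcount
  have mem_iff : u ∈ G.neighborFinset x ↔ G.Adj u x := by rw [mem_neighborFinset, G.adj_comm]
  simp only [mem_iff] at hcount
  split_ifs at hcount ⊢ with hux
  · have hd : 0 < d := by
      rw [← hreg u, G.degree_pos_iff_exists_adj]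
      exact ⟨x, hux⟩
    omega
  · omega

theorem even_card_interior [DecidableRel G.Adj] (h : IsPendant G d u A)
    (hreg : G.IsRegularOfDegree d) : Even #{x ∈ A | ¬G.Adj u x} := by
  classical
  have handshake := even_card_filter_odd_card_filter_adj Gᶜ A
  have odd_iff : ∀ x ∈ A, Odd #{y ∈ A | Gᶜ.Adj x y} ↔ ¬G.Adj u x := by
    intro x hx
    rw [h.card_filter_compl_adj hreg hx]
    split_ifs with hux <;> simp [hux]
  rwa [filter_congr odd_iff] at handshake

theorem card_interior [DecidableEq V] [DecidableRel G.Adj] (h : IsPendant G d u A)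
    (hreg : G.IsRegularOfDegree d) : #{x ∈ A | ¬G.Adj u x} = #(G.neighborFinset u \ A) + 2 := by
  have hA := h.card_adj_add_card_interior
  have hu := card_sdiff_add_card_inter (G.neighborFinset u) A
  have inter_eq : G.neighborFinset u ∩ A = {x ∈ A | G.Adj u x} := by
    ext y
    simp [and_comm]
  rw [inter_eq, card_neighborFinset_eq_degree, hreg u] at hu
  omega

theorem two_le_card_neighborFinset_sdiff [DecidableEq V] (h : IsPendant G d u A)
    (hreg : G.IsRegularOfDegree d) : 2 ≤ #(G.neighborFinset u \ A) := by
  classical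
  obtain ⟨z, hzA, huz⟩ := h.exists_adj_notMem
  have hpos : 0 < #(G.neighborFinset u \ A) := card_pos.2 ⟨z, by simp [huz, hzA]⟩
  obtain ⟨k, hk⟩ := h.even_card_interior hreg
  have hcard := h.card_interior hreg
  omega

theorem four_le_card_interior [DecidableRel G.Adj] (h : IsPendant G d u A)
    (hreg : G.IsRegularOfDegree d) : 4 ≤ #{x ∈ A | ¬G.Adj u x} := by
  classical
  have hcard := h.card_interior hreg
  have hout := h.two_le_card_neighborFinset_sdiff hreg
  omega

theorem mem_distSet_two_of_not_adj (h : IsPendant G d u A) (hreg : G.IsRegularOfDegree d)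
    (hd : 2 < d) (hx : x ∈ A) (hy : y ∈ A) (hne : x ≠ y) (hxy : ¬G.Adj x y) :
    y ∈ distSet G x 2 := by
  classical
  have card_le_two : ∀ w ∈ A, #{m ∈ A | Gᶜ.Adj w m} ≤ 2 := by
    intro w hw
    rw [h.card_filter_compl_adj hreg hw]
    split_ifs <;> omega
  obtain ⟨m, hmA, hm⟩ : ∃ m ∈ A, m ∉ {m ∈ A | Gᶜ.Adj x m} ∪ {m ∈ A | Gᶜ.Adj y m} := by
    apply exists_mem_notMem_of_card_lt_card
    calc #({m ∈ A | Gᶜ.Adj x m} ∪ {m ∈ A | Gᶜ.Adj y m})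
        ≤ 2 + 2 := (card_union_le _ _).trans (add_le_add (card_le_two x hx) (card_le_two y hy))
      _ < #A := by rw [h.card_eq]; omega
  simp only [mem_union, mem_filter, compl_adj, hmA, true_and, not_or, not_and_not_right] at hm
  have hmx : x ≠ m := by rintro rfl; exact hxy (hm.2 hne.symm).symm
  have hmy : y ≠ m := by rintro rfl; exact hxy (hm.1 hne)
  exact mem_distSet_two.2 ⟨hne, hxy, m, hm.1 hmx, (hm.2 hmy).symm⟩

theorem deg2_interior_le_two (h : IsPendant G d u A) (hreg : G.IsRegularOfDegree d)
    (hb : b ∈ A) (hub : ¬G.Adj u b) : deg2 G b ≤ 2 := by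
  classical
  have hsub : distSet G b 2 ⊆ ↑(insert u {y ∈ A | Gᶜ.Adj b y}) := by
    intro y hy
    obtain ⟨hne, hby, -⟩ := mem_distSet_two.1 hy
    simp only [coe_insert, coe_filter, Set.mem_insert_iff, Set.mem_ofPred_eq, compl_adj]
    exact (h.mem_or_eq_of_mem_distSet_two hb hub hy).symm.imp_right fun hyA => ⟨hyA, hne, hby⟩
  calc deg2 G b ≤ #(insert u {y ∈ A | Gᶜ.Adj b y}) := deg2_le_card hsub
    _ ≤ #{y ∈ A | Gᶜ.Adj b y} + 1 := card_insert_le _ _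
    _ = 2 := by rw [h.card_filter_compl_adj hreg hb, if_neg hub]

theorem four_le_deg2_of_adj (h : IsPendant G d u A) (hreg : G.IsRegularOfDegree d) (hd : 2 < d)
    (ha : a ∈ A) (hua : G.Adj u a) : 4 ≤ deg2 G a := by
  classical
  have hsub : ↑({y ∈ A | Gᶜ.Adj a y} ∪ (G.neighborFinset u \ A)) ⊆ distSet G a 2 := by
    intro y hy
    simp only [coe_union, coe_filter, coe_sdiff, coe_neighborFinset, Set.mem_union,
      Set.mem_ofPred_eq, compl_adj, Set.mem_sdiff, mem_neighborSet, mem_coe] at hy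
    rcases hy with ⟨hyA, hne, hay⟩ | ⟨huy, hyA⟩
    · exact h.mem_distSet_two_of_not_adj hreg hd ha hyA hne hay
    · exact mem_distSet_two.2 ⟨ne_of_mem_of_not_mem ha hyA,
        fun hay => hyA (h.mem_of_adj ha hay huy.ne'), u, hua.symm, huy⟩
  have hdisj : Disjoint {y ∈ A | Gᶜ.Adj a y} (G.neighborFinset u \ A) :=
    disjoint_sdiff.mono_left (filter_subset _ _)
  calc 4 ≤ #{y ∈ A | Gᶜ.Adj a y} + #(G.neighborFinset u \ A) := by
        rw [h.card_filter_compl_adj hreg ha, if_pos hua]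
        have := h.two_le_card_neighborFinset_sdiff hreg
        omega
    _ = #({y ∈ A | Gᶜ.Adj a y} ∪ (G.neighborFinset u \ A)) := (card_union_of_disjoint hdisj).symm
    _ ≤ deg2 G a := card_le_deg2 hsub

theorem exists_adj_of_mem_interior [DecidableRel G.Adj] (h : IsPendant G d u A)
    (hreg : G.IsRegularOfDegree d) (hcard : 2 ≤ #{x ∈ A | G.Adj u x}) (hb : b ∈ A)
    (hub : ¬G.Adj u b) : ∃ a ∈ A, G.Adj u a ∧ G.Adj a b := by
  classical
  obtain ⟨a, ha, hab⟩ : ∃ a ∈ {x ∈ A | G.Adj u x}, a ∉ {y ∈ A | Gᶜ.Adj b y} := by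
    apply exists_mem_notMem_of_card_lt_card
    rw [h.card_filter_compl_adj hreg hb, if_neg hub]
    omega
  simp only [mem_filter, compl_adj] at ha hab
  refine ⟨a, ha.1, ha.2, ?_⟩
  by_contra hn
  exact hab ⟨ha.1, by rintro rfl; exact hub ha.2, fun hba => hn hba.symm⟩

theorem exists_interior_adj (h : IsPendant G d u A) (hreg : G.IsRegularOfDegree d)
    (ha : a ∈ A) (hua : G.Adj u a) : ∃ b ∈ A, ¬G.Adj u b ∧ G.Adj b a := by
  classical
  obtain ⟨b, hb, hab⟩ : ∃ b ∈ {x ∈ A | ¬G.Adj u x}, b ∉ {y ∈ A | Gᶜ.Adj a y} := by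
    apply exists_mem_notMem_of_card_lt_card
    rw [h.card_filter_compl_adj hreg ha, if_pos hua]
    have := h.four_le_card_interior hreg
    omega
  simp only [mem_filter, compl_adj] at hb hab
  refine ⟨b, hb.1, hb.2, ?_⟩
  by_contra hn
  exact hab ⟨hb.1, by rintro rfl; exact hb.2 hua, fun hab => hn hab.symm⟩

theorem four_le_deg2 (h : IsPendant G d u A) (hreg : G.IsRegularOfDegree d) (hd : 3 < d) :
    4 ≤ deg2 G u := by
  classical
  by_cases hinner : 2 ≤ #{x ∈ A | G.Adj u x}
  · refine (h.four_le_card_interior hreg).trans (card_le_deg2 fun b hb => ?_)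
    obtain ⟨hbA, hub⟩ := mem_filter.1 hb
    obtain ⟨a, -, hua, hab⟩ := h.exists_adj_of_mem_interior hreg hinner hbA hub
    exact h.interior_mem_distSet_two hbA hub hua hab
  -- With a single neighbor of `u` in `A` there are `d + 1 ≥ 5` interior vertices, by parity at
  -- least 6, and that neighbor is adjacent to all but at most two of them.
  · obtain ⟨a, haA, hua⟩ := h.exists_adj_mem
    have hsub : ↑({x ∈ A | ¬G.Adj u x} \ {y ∈ A | Gᶜ.Adj a y}) ⊆ distSet G u 2 := by
      intro b hb
      simp only [coe_sdiff, coe_filter, Set.mem_sdiff, Set.mem_ofPred_eq, compl_adj] at hb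
      have hne : a ≠ b := by rintro rfl; exact hb.1.2 hua
      have hab : G.Adj a b := by
        by_contra hn
        exact hb.2 ⟨hb.1.1, hne, hn⟩
      exact h.interior_mem_distSet_two hb.1.1 hb.1.2 hua hab
    have hmissed : #{y ∈ A | Gᶜ.Adj a y} = 2 := by
      rw [h.card_filter_compl_adj hreg haA, if_pos hua]
    have hsdiff := le_card_sdiff {y ∈ A | Gᶜ.Adj a y} {x ∈ A | ¬G.Adj u x}
    have hle := card_le_deg2 hsub
    have hA := h.card_adj_add_card_interior
    obtain ⟨k, hk⟩ := h.even_card_interior hreg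
    omega

theorem reflTransGen_regStep_iff (h : IsPendant G d u A) (hreg : G.IsRegularOfDegree d)
    (hd : 3 < d) (hb : b ∈ A) (hub : ¬G.Adj u b) :
    Relation.ReflTransGen (regStep G) b y ↔ y ∈ A ∧ ¬G.Adj u y := by
  have deg2_le {w : V} (hw : w ∈ A) (huw : ¬G.Adj u w) : deg2 G w ≤ 3 :=
    (h.deg2_interior_le_two hreg hw huw).trans (by norm_num)
  constructor
  · intro hby
    induction hby with
    | refl => exact ⟨hb, hub⟩
    | @tail x y _ hxy ih =>
      obtain ⟨hxA, hux⟩ := ih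
      have hy : y ∈ A ∨ y = u := by
        rcases reachable_and_dist_le_two_iff.1 hxy.2.2 with rfl | hadj | hdist
        · exact .inl hxA
        · exact .inl (h.mem_of_adj_interior hxA hux hadj)
        · exact h.mem_or_eq_of_mem_distSet_two hxA hux hdist
      have hdeg : deg2 G y < 4 := Nat.lt_succ_of_le hxy.2.1
      rcases hy with hyA | rfl
      · exact ⟨hyA, fun huy => hdeg.not_ge (h.four_le_deg2_of_adj hreg (by omega) hyA huy)⟩
      · exact absurd (h.four_le_deg2 hreg hd) hdeg.not_ge
  · rintro ⟨hyA, huy⟩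
    refine .single ⟨deg2_le hb hub, deg2_le hyA huy, reachable_and_dist_le_two_iff.2 ?_⟩
    by_cases hne : b = y
    · exact .inl hne
    by_cases hby : G.Adj b y
    · exact .inr (.inl hby)
    · exact .inr (.inr (h.mem_distSet_two_of_not_adj hreg (by omega) hb hyA hne hby))

theorem eq_of_isRegion (h : IsPendant G d u A) (hreg : G.IsRegularOfDegree d) (hd : 3 < d)
    (hb : b ∈ A) (hub : ¬G.Adj u b) {R : Set V} (hR : IsRegion G R) (hbR : b ∈ R) : R = A := by
  have hdeg : deg2 G b ≤ 3 := (h.deg2_interior_le_two hreg hb hub).trans (by norm_num)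
  rw [hR.eq_of_mem hbR hdeg]
  simp only [h.reflTransGen_regStep_iff hreg hd hb hub]
  ext y
  simp only [Set.mem_union, Set.mem_ofPred_eq, mem_coe]
  constructor
  · rintro (⟨hyA, -⟩ | ⟨x, ⟨hxA, hux⟩, hxy⟩)
    · exact hyA
    · exact h.mem_of_adj_interior hxA hux hxy
  · intro hyA
    by_cases huy : G.Adj u y
    · obtain ⟨x, hxA, hux, hxy⟩ := h.exists_interior_adj hreg hyA huy
      exact .inr ⟨x, ⟨hxA, hux⟩, hxy⟩
    · exact .inl ⟨hyA, huy⟩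

end IsPendant

section Component

variable {G : SimpleGraph V} {u v w x y : V}

theorem notMem_compDel : u ∉ compDel G u v := fun ⟨p, hp⟩ => hp p.end_mem_support

theorem mem_compDel_of_adj (hx : x ∈ compDel G u v) (hxy : G.Adj x y) (hy : y ≠ u) :
    y ∈ compDel G u v := by
  obtain ⟨p, hp⟩ := hx
  exact ⟨p.concat hxy, by simp [Walk.support_concat, hp, hy.symm]⟩

theorem compDel_subset {S : Set V} (hv : v ∈ S)
    (hS : ∀ ⦃x y⦄, x ∈ S → G.Adj x y → y ≠ u → y ∈ S) : compDel G u v ⊆ S := by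
  rintro w ⟨p, hp⟩
  by_contra hw
  obtain ⟨e, he, hfst, hsnd⟩ := p.exists_boundary_dart S hv hw
  refine hsnd (hS hfst e.adj ?_)
  rintro rfl
  exact hp (p.dart_snd_mem_support_of_mem_darts he)

theorem mem_N2'_of_adj (hx : x ∈ distSet G v 2) (hxy : G.Adj x y) (hvy : v ≠ y)
    (hadj : ¬G.Adj v y) (hy : y ∉ distSet G v 2) : x ∈ N2' G v := by
  have hvx : G.Reachable v x := .of_dist_ne_zero (hx.trans_ne two_ne_zero)
  have hle : G.dist v y ≤ 2 + 1 := by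
    have htri := hvx.dist_triangle_left y
    rwa [hx, dist_eq_one_iff_adj.2 hxy] at htri
  have hgt : ¬(G.Reachable v y ∧ G.dist v y ≤ 2) := by
    rw [reachable_and_dist_le_two_iff]
    tauto
  have hlt : ¬G.dist v y ≤ 2 := fun h => hgt ⟨hvx.trans hxy.reachable, h⟩
  exact ⟨hx, y, by omega, hxy⟩

theorem mem_distSet_two_of_N2'_eq_singleton (hN : N2' G v = {u}) : u ∈ distSet G v 2 :=
  (hN ▸ rfl : u ∈ N2' G v).1

theorem compDel_eq (hN : N2' G v = {u}) :
    compDel G u v = insert v (G.neighborSet v ∪ (distSet G v 2 \ {u})) := by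
  obtain ⟨hvu, hadj, -⟩ := mem_distSet_two.1 (mem_distSet_two_of_N2'_eq_singleton hN)
  apply Set.Subset.antisymm
  · refine compDel_subset (Set.mem_insert _ _) fun x y hx hxy hy => ?_
    simp only [Set.mem_insert_iff, Set.mem_union, mem_neighborSet, Set.mem_sdiff,
      Set.mem_singleton_iff, hy, not_false_eq_true, and_true] at hx ⊢
    by_contra! hfar
    obtain ⟨hyv, hvy, hy2⟩ := hfar
    rcases hx with rfl | hvx | ⟨hx2, hxu⟩
    · exact hvy hxy
    · exact hy2 (mem_distSet_two.2 ⟨hyv.symm, hvy, x, hvx, hxy⟩)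
    · have hxN := mem_N2'_of_adj hx2 hxy hyv.symm hvy hy2
      rw [hN] at hxN
      exact hxu hxN
  · have hv : v ∈ compDel G u v := ⟨.nil, by simpa using hvu.symm⟩
    have hnbr : ∀ m, G.Adj v m → m ∈ compDel G u v := fun m hvm =>
      mem_compDel_of_adj hv hvm (by rintro rfl; exact hadj hvm)
    rintro y (rfl | hvy | ⟨hy2, hyu⟩)
    · exact hv
    · exact hnbr y hvy
    · obtain ⟨-, -, m, hvm, hmy⟩ := mem_distSet_two.1 hy2
      exact mem_compDel_of_adj (hnbr m hvm) hmy hyu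

theorem ncard_compDel [G.LocallyFinite] (hN : N2' G v = {u}) :
    (compDel G u v).ncard = G.degree v + deg2 G v := by
  have hu := mem_distSet_two_of_N2'_eq_singleton hN
  have hfin := finite_distSet_two (G := G) (x := v)
  have hv : v ∉ G.neighborSet v ∪ (distSet G v 2 \ {u}) := by
    simp [distSet]
  have hdisj : Disjoint (G.neighborSet v) (distSet G v 2 \ {u}) :=
    Set.disjoint_left.2 fun y hvy hy => (mem_distSet_two.1 hy.1).2.1 hvy
  rw [compDel_eq hN, Set.ncard_insert_of_notMem hv ((Set.toFinite _).union hfin.sdiff),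
    Set.ncard_union_eq hdisj (Set.toFinite _) hfin.sdiff, add_assoc,
    Set.ncard_sdiff_singleton_add_one hu hfin, ← coe_neighborFinset, Set.ncard_coe_finset,
    card_neighborFinset_eq_degree, deg2]

theorem isPendant_of_coe_eq_compDel [G.LocallyFinite] {d : ℕ} {A : Finset V}
    (hA : ↑A = compDel G u v) (hd : G.degree v = d) (hv : deg2 G v = 2) (hN : N2' G v = {u}) :
    IsPendant G d u A := by
  have mem_iff (y : V) : y ∈ A ↔ y ∈ compDel G u v := by rw [← hA, mem_coe]
  obtain ⟨hu, z, hz, huz⟩ : u ∈ N2' G v := hN ▸ rfl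
  refine ⟨?_, ?_, ?_, ?_, ?_⟩
  · rw [← Set.ncard_coe_finset, hA, ncard_compDel hN, hd, hv]
  · exact (mem_iff u).not.2 notMem_compDel
  · intro x y hx hxy hy
    exact (mem_iff y).2 (mem_compDel_of_adj ((mem_iff x).1 hx) hxy hy)
  · obtain ⟨-, -, a, hva, hau⟩ := mem_distSet_two.1 hu
    refine ⟨a, (mem_iff a).2 ?_, hau.symm⟩
    rw [compDel_eq hN]
    exact .inr (.inl hva)
  · refine ⟨z, fun hzA => ?_, huz⟩
    rw [mem_iff, compDel_eq hN] at hzA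
    rcases hzA with rfl | hvz | ⟨hz2, -⟩
    · simp at hz
    · rw [mem_neighborSet, ← dist_eq_one_iff_adj] at hvz
      omega
    · rw [distSet, Set.mem_ofPred_eq] at hz2
      omega

end Component

theorem stmt10_general (G : SimpleGraph V) (d : ℕ) (hd : 3 < d) (hreg : IsRegularGraph G d)
    (R : Set V) (hR : IsRegion G R) (v u : V) (hvR : v ∈ R) (hv : deg2 G v = 2)
    (hN : N2' G v = {u}) : R = compDel G u v ∧ u ∉ R := by
  have hlf : G.LocallyFinite := fun x =>
    (Set.finite_of_ncard_ne_zero (by rw [hreg x]; omega)).fintype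
  have hdeg : G.IsRegularOfDegree d := fun x => by
    rw [← hreg x, ← coe_neighborFinset, Set.ncard_coe_finset, card_neighborFinset_eq_degree]
  have hfin : (compDel G u v).Finite := by
    apply Set.finite_of_ncard_ne_zero
    rw [ncard_compDel hN, hv]
    omega
  obtain ⟨A, hA⟩ := hfin.exists_finset_coe
  have hpendant : IsPendant G d u A := isPendant_of_coe_eq_compDel hA (hdeg v) hv hN
  have hvA : v ∈ A := by
    rw [← mem_coe, hA, compDel_eq hN]
    exact Set.mem_insert _ _
  have huv : ¬G.Adj u v := fun h =>
    (mem_distSet_two.1 (mem_distSet_two_of_N2'_eq_singleton hN)).2.1 h.symm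
  have hRA : R = A := hpendant.eq_of_isRegion hdeg hd hvA huv hR hvR
  exact ⟨hRA.trans hA, hRA ▸ hpendant.notMem⟩

end

/-- Let `d > 6`, `G` connected `d`-regular with `G²` not complete, `R` a
C region of `G` (a region with no vertex of `deg₂ = 1`), `v ∈ R` with `deg₂(v) = 2` and
`N₂'(v) = {u}`, and `G_v` the component of `G - u` containing `v`. Then `R = G_v`; in
particular `u ∉ R`. -/
theorem stmt10 {V : Type*} [Fintype V] (G : SimpleGraph V) (d : ℕ) (hd : 6 < d)
    (hconn : G.Connected) (hreg : IsRegularGraph G d) (hnotcomplete : graphSquare G ≠ ⊤)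
    (R : Set V) (hR : IsRegion G R) (hC : ∀ x ∈ R, deg2 G x ≠ 1)
    (v u : V) (hvR : v ∈ R) (hv : deg2 G v = 2) (hN : N2' G v = {u}) :
    R = compDel G u v ∧ u ∉ R :=
  stmt10_general G d (by omega) hreg R hR v u hvR hv hN
end

section
/- Let d > 6, let G be a connected d-regular graph such that G² is not complete, let R be a C region of G, and let v ∈ R satisfy deg₂(v) = 2 and N₂'(v) = {u}. Then R contains at least two vertices adjacent to u. -/
open SimpleGraph

variable {V : Type*}

/-!
Write `B(v)` for the set of vertices within distance 2 of `v`; balls being open, this is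
`G.ball v 3`. If a neighbor `y` of `v` is not adjacent to any vertex of `N₂'(v)`, no walk of
length 2 from `y` leaves `B(v)`, so `B(y) ⊆ B(v)`, and since `|B(v)| = d + 1 + deg₂(v)`, also
`deg₂(y) ≤ deg₂(v)`; the inequality is strict when `B(y)` omits some vertex of `B(v)`.

Let `x` be a common neighbor of `v` and `u`. As `x` has the neighbor `u` outside the closed
neighborhood of `v`, it is not adjacent to some other neighbor `y` of `v`. If `y` is adjacent to
`u`, then `x` and `y` are the two vertices sought. Otherwise `deg₂(y) ≤ 2`, so `R` contains all
neighbors of `y`, and `deg₂(y) ≠ 1` forces `u ∈ B(y)`: a common neighbor of `y` and `u` serves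
together with `x`.
-/

section Distance

variable {G : SimpleGraph V} {u v w y : V}

theorem mem_distSet_iff_edist_eq {k : ℕ} (hk : k ≠ 0) : u ∈ distSet G v k ↔ G.edist v u = k :=
  ENat.toNat_eq_iff hk

theorem mem_distSet_two_iff :
    u ∈ distSet G v 2 ↔ v ≠ u ∧ ¬ G.Adj v u ∧ (G.commonNeighbors v u).Nonempty := by
  rw [← edist_eq_two_iff]
  exact mem_distSet_iff_edist_eq two_ne_zero

theorem distSet_nonempty_of_notMem_ball {k : ℕ} (hvu : G.Reachable v u) (hu : u ∉ G.ball v k) :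
    (distSet G v k).Nonempty := by
  obtain ⟨p, hp⟩ := hvu.exists_walk_length_eq_dist
  have hk : k ≤ p.length := by
    rwa [mem_ball, edist_comm, ← hvu.coe_dist_eq_edist, Nat.cast_lt, not_lt, ← hp] at hu
  refine ⟨p.getVert k, ?_⟩
  have hprefix := length_eq_dist_of_subwalk hp (p.isSubwalk_take k)
  rw [Walk.take_length, min_eq_left hk] at hprefix
  exact hprefix.symm

theorem disjoint_ball_distSet {k : ℕ} (hk : k ≠ 0) : Disjoint (G.ball v k) (distSet G v k) := by
  rw [Set.disjoint_left]
  intro u hu hu'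
  rw [mem_ball, edist_comm, (mem_distSet_iff_edist_eq hk).mp hu'] at hu
  exact hu.false

theorem ball_add_one_eq_union {k : ℕ} (hk : k ≠ 0) :
    G.ball v (k + 1) = G.ball v k ∪ distSet G v k := by
  ext u
  rw [Set.mem_union, mem_ball, mem_ball, mem_distSet_iff_edist_eq hk, G.edist_comm (u := v),
    ENat.lt_natCast_add_one_iff, le_iff_lt_or_eq]

theorem ball_three_eq_union : G.ball v 3 = G.ball v 2 ∪ distSet G v 2 := by
  rw [← two_add_one_eq_three]
  exact ball_add_one_eq_union two_ne_zero

theorem neighborSet_subset_ball_add_one {k : ℕ} (hw : w ∈ G.ball v k) :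
    G.neighborSet w ⊆ G.ball v (k + 1) := by
  intro z hwz
  calc G.edist z v ≤ G.edist z w + G.edist w v := G.edist_triangle
    _ = G.edist w v + 1 := by rw [edist_eq_one_iff_adj.mpr (G.adj_symm hwz), add_comm]
    _ < k + 1 := (ENat.add_lt_add_iff_right ENat.one_ne_top).mpr hw

theorem neighborSet_subset_ball_three_of_notMem_N2' (hw : w ∈ distSet G v 2)
    (hw' : w ∉ N2' G v) : G.neighborSet w ⊆ G.ball v 3 := by
  intro z hwz
  have hdist : G.dist v w = 2 := hw
  have hdist_ne : G.dist v z ≠ 3 := fun h ↦ hw' ⟨hw, z, h, hwz⟩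
  have hdist_lt : G.dist v z < 3 := by
    have := Adj.diff_dist_adj (u := v) hwz
    omega
  have hvz : G.Reachable v z :=
    (Reachable.of_dist_ne_zero (by omega : G.dist v w ≠ 0)).trans hwz.reachable
  rw [mem_ball, edist_comm, ← hvz.coe_dist_eq_edist]
  exact_mod_cast hdist_lt

theorem ball_three_subset_of_disjoint_N2' (hvy : G.Adj v y)
    (hy : Disjoint (N2' G v) (G.neighborSet y)) : G.ball y 3 ⊆ G.ball v 3 := by
  have neighborSet_subset {w : V} (hw : w ∈ G.ball v 2) : G.neighborSet w ⊆ G.ball v 3 := by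
    rw [← two_add_one_eq_three]
    exact neighborSet_subset_ball_add_one (k := 2) hw
  have hy_mem : y ∈ G.ball v 2 := ball_two ▸ Set.mem_insert_of_mem v hvy
  rw [ball_three_eq_union (v := y), ball_two, Set.union_subset_iff, Set.insert_subset_iff]
  refine ⟨⟨ball_mono (by norm_num) hy_mem, neighborSet_subset hy_mem⟩, fun z hz ↦ ?_⟩
  obtain ⟨-, -, t, hyt, hzt⟩ := mem_distSet_two_iff.mp hz
  rcases ball_three_eq_union.subset (neighborSet_subset hy_mem hyt) with ht | ht
  · exact neighborSet_subset ht hzt.symm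
  · have ht' : t ∉ N2' G v := fun h ↦ hy.notMem_of_mem_left h hyt
    exact neighborSet_subset_ball_three_of_notMem_N2' ht ht' hzt.symm

end Distance

section Regular

variable {G : SimpleGraph V} {d : ℕ} {u v x y : V}

theorem IsRegularGraph.finite_neighborSet (hreg : IsRegularGraph G d) (hd : 0 < d) (v : V) :
    (G.neighborSet v).Finite :=
  Set.finite_of_ncard_pos (hreg v ▸ hd)

theorem IsRegularGraph.finite_distSet_two (hreg : IsRegularGraph G d) (hd : 0 < d) (v : V) :
    (distSet G v 2).Finite := by
  have hfin := hreg.finite_neighborSet hd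
  refine ((hfin v).biUnion fun t _ ↦ hfin t).subset fun z hz ↦ ?_
  obtain ⟨-, -, t, hvt, hzt⟩ := mem_distSet_two_iff.mp hz
  exact Set.mem_biUnion hvt hzt.symm

theorem IsRegularGraph.finite_ball_three (hreg : IsRegularGraph G d) (hd : 0 < d) (v : V) :
    (G.ball v 3).Finite := by
  rw [ball_three_eq_union, ball_two]
  exact ((hreg.finite_neighborSet hd v).insert v).union (hreg.finite_distSet_two hd v)

theorem IsRegularGraph.ncard_ball_three (hreg : IsRegularGraph G d) (hd : 0 < d) (v : V) :
    (G.ball v 3).ncard = d + 1 + deg2 G v := by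
  have hfin := hreg.finite_neighborSet hd v
  have hdisj : Disjoint (G.ball v 2) (distSet G v 2) := disjoint_ball_distSet two_ne_zero
  rw [ball_two] at hdisj
  rw [ball_three_eq_union, ball_two,
    Set.ncard_union_eq hdisj (hfin.insert v) (hreg.finite_distSet_two hd v),
    Set.ncard_insert_of_notMem G.notMem_neighborSet_self hfin, hreg v, deg2]

theorem IsRegularGraph.deg2_le_deg2 (hreg : IsRegularGraph G d) (hd : 0 < d)
    (h : G.ball y 3 ⊆ G.ball v 3) : deg2 G y ≤ deg2 G v := by
  have hcard := Set.ncard_le_ncard h (hreg.finite_ball_three hd v)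
  rw [hreg.ncard_ball_three hd, hreg.ncard_ball_three hd] at hcard
  exact Nat.le_of_add_le_add_left hcard

theorem IsRegularGraph.deg2_lt_deg2 (hreg : IsRegularGraph G d) (hd : 0 < d)
    (h : G.ball y 3 ⊂ G.ball v 3) : deg2 G y < deg2 G v := by
  have hcard := Set.ncard_lt_ncard h (hreg.finite_ball_three hd v)
  rw [hreg.ncard_ball_three hd, hreg.ncard_ball_three hd] at hcard
  exact Nat.lt_of_add_lt_add_left hcard

theorem IsRegularGraph.mem_distSet_two_of_deg2_ne_one (hreg : IsRegularGraph G d) (hd : 0 < d)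
    (hball : G.ball y 3 ⊆ G.ball v 3) (hv : deg2 G v ≤ 2) (hy : deg2 G y ≠ 1)
    (hu : u ∈ G.ball v 3) (hu' : u ∉ G.ball y 2) : u ∈ distSet G y 2 := by
  by_contra hu_dist
  have hmiss : u ∉ G.ball y 3 := by
    rw [ball_three_eq_union]
    exact fun h ↦ h.elim hu' hu_dist
  have hlt : deg2 G y < deg2 G v :=
    hreg.deg2_lt_deg2 hd (hball.ssubset_of_mem_notMem hu hmiss)
  have hyv : G.Reachable y v :=
    reachable_of_edist_ne_top (hball (mem_ball_self (by norm_num))).ne_top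
  have huv : G.Reachable u v := reachable_of_edist_ne_top hu.ne_top
  have hpos : 0 < deg2 G y :=
    (Set.ncard_pos (hreg.finite_distSet_two hd y)).mpr
      (distSet_nonempty_of_notMem_ball (hyv.trans huv.symm) hu')
  omega

theorem IsRegularGraph.exists_adj_ne_not_adj (hreg : IsRegularGraph G d) (hd : 0 < d)
    (hvx : G.Adj v x) (hxu : G.Adj x u) (hne : v ≠ u) (hvu : ¬ G.Adj v u) :
    ∃ y, G.Adj v y ∧ y ≠ x ∧ ¬ G.Adj x y := by
  have hfin := hreg.finite_neighborSet hd
  by_contra! hall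
  have hsub : insert u (insert v (G.neighborSet v \ {x})) ⊆ G.neighborSet x := by
    rintro z (rfl | rfl | ⟨hvz, hzx⟩)
    · exact hxu
    · exact hvx.symm
    · exact hall z hvz hzx
  have hcard := Set.ncard_le_ncard hsub (hfin x)
  rw [Set.ncard_insert_of_notMem (by simp [hne.symm, hvu]) ((hfin v).sdiff.insert v),
    Set.ncard_insert_of_notMem (by simp) (hfin v).sdiff,
    Set.ncard_sdiff_singleton_of_mem ((G.mem_neighborSet v x).mpr hvx), hreg, hreg] at hcard
  omega

end Regular

theorem IsRegion.neighborSet_subset {G : SimpleGraph V} {R : Set V} {v : V} (hR : IsRegion G R)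
    (hvR : v ∈ R) (hv : deg2 G v ≤ 3) : G.neighborSet v ⊆ R := by
  obtain ⟨x₀, hx₀, rfl⟩ := hR
  refine fun y hvy ↦ Or.inr ⟨v, ?_, hvy⟩
  rcases hvR with hv_class | ⟨x, hx, hxv⟩
  · exact hv_class
  · have hx_low : deg2 G x ≤ 3 := by
      rcases Relation.ReflTransGen.cases_tail hx with rfl | ⟨_, -, hstep⟩
      · exact hx₀
      · exact hstep.2.1
    exact hx.tail ⟨hx_low, hv, hxv.reachable, (dist_eq_one_iff_adj.mpr hxv).trans_le one_le_two⟩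

theorem stmt11_general {V : Type*} (G : SimpleGraph V) (d : ℕ) (hd : 0 < d)
    (hreg : IsRegularGraph G d) (R : Set V) (hR : IsRegion G R) (hC : ∀ x ∈ R, deg2 G x ≠ 1)
    (v u : V) (hvR : v ∈ R) (hv : deg2 G v = 2) (hN : N2' G v = {u}) :
    2 ≤ (R ∩ G.neighborSet u).ncard := by
  have two_le_of {a b : V} (ha : a ∈ R) (hau : G.Adj a u) (hb : b ∈ R) (hbu : G.Adj b u)
      (hab : a ≠ b) : 2 ≤ (R ∩ G.neighborSet u).ncard :=
    (Set.one_lt_ncard ((hreg.finite_neighborSet hd u).inter_of_right R)).mpr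
      ⟨a, ⟨ha, hau.symm⟩, b, ⟨hb, hbu.symm⟩, hab⟩
  have hu : u ∈ distSet G v 2 := (hN.superset rfl : u ∈ N2' G v).1
  obtain ⟨hne, hvu, x, hvx, hux⟩ := mem_distSet_two_iff.mp hu
  obtain ⟨y, hvy, hyx, hxy⟩ := hreg.exists_adj_ne_not_adj hd hvx hux.symm hne hvu
  have hNv : G.neighborSet v ⊆ R := hR.neighborSet_subset hvR (by omega)
  by_cases hyu : G.Adj y u
  · exact two_le_of (hNv hvy) hyu (hNv hvx) hux.symm hyx
  have hu_ball : u ∉ G.ball y 2 := by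
    rw [ball_two]
    exact fun h ↦ h.elim (fun huy ↦ hvu (huy ▸ hvy)) hyu
  have hball : G.ball y 3 ⊆ G.ball v 3 :=
    ball_three_subset_of_disjoint_N2' hvy (hN ▸ Set.disjoint_singleton_left.mpr hyu)
  have hy_low : deg2 G y ≤ 3 := (hreg.deg2_le_deg2 hd hball).trans (by omega)
  obtain ⟨-, -, t, hyt, hut⟩ := mem_distSet_two_iff.mp
    (hreg.mem_distSet_two_of_deg2_ne_one hd hball hv.le (hC y (hNv hvy))
      (ball_three_eq_union.superset (Or.inr hu)) hu_ball)
  have htx : t ≠ x := fun h ↦ hxy (h ▸ G.adj_symm hyt)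
  exact two_le_of (hR.neighborSet_subset (hNv hvy) hy_low hyt) hut.symm (hNv hvx) hux.symm htx

/-- Let `d > 6`, `G` connected `d`-regular with `G²` not complete, `R` a
C region of `G` (a region with no vertex of `deg₂ = 1`), and `v ∈ R` with `deg₂(v) = 2`
and `N₂'(v) = {u}`. Then `R` contains at least two vertices adjacent to `u`. -/
theorem stmt11 {V : Type*} [Fintype V] (G : SimpleGraph V) (d : ℕ) (hd : 6 < d)
    (hconn : G.Connected) (hreg : IsRegularGraph G d) (hnotcomplete : graphSquare G ≠ ⊤)
    (R : Set V) (hR : IsRegion G R) (hC : ∀ x ∈ R, deg2 G x ≠ 1)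
    (v u : V) (hvR : v ∈ R) (hv : deg2 G v = 2) (hN : N2' G v = {u}) :
    2 ≤ (R ∩ G.neighborSet u).ncard := by
  exact stmt11_general G d (by omega) hreg R hR hC v u hvR hv hN
end
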